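/- Ramanujan's quadratic transformation: for real x with |x| small enough that all arguments lie in the domain of analyticity, (1+x²)^(1/4)·F((1+ix)/2) = ((1+i)/2)·F((1 + x/√(1+x²))/2) + ((1-i)/2)·F((1 - x/√(1+x²))/2), where F(z) = ₂F₁(1/2,1/2;1;z). -/

import Mathlib

open Real Complex

/-- The Gauss hypergeometric function `F(z) = ₂F₁(1/2, 1/2; 1; z)` given by its power series
`∑ₙ ((1/2)ₙ(1/2)ₙ/((1)ₙ n!)) zⁿ` (with `(1/2)ₙ/n! = (2n)!/(4ⁿ (n!)²)`), which converges on
the open unit disk; for `|x|` small all arguments below lie in this disk. -/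
noncomputable def hypF (z : ℂ) : ℂ :=
  ∑' n : ℕ, ((((2*n).factorial : ℂ)) / (4^n * (n.factorial : ℂ)^2))^2 * z^n


lemma hyp_series_hasDerivAt (a : ℕ → ℂ) (ha : ∀ n, ‖a n‖ ≤ n + 1) {z : ℂ} (hz : ‖z‖ < 1) :
    HasDerivAt (fun w : ℂ => ∑' n, a n * w ^ n) (∑' n : ℕ, ((n : ℂ) + 1) * a (n + 1) * z ^ n) z := by
  obtain ⟨r, hr1, hr2⟩ := exists_between hz
  have hr0 : 0 < r := lt_of_le_of_lt (norm_nonneg z) hr1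
  have hrn : ‖r‖ < 1 := by rwa [Real.norm_of_nonneg hr0.le]
  have hS : Summable (fun n : ℕ => ((n : ℝ) + 1) * n * r ^ (n - 1)) := by
    rw [← summable_nat_add_iff 1]
    have h2 := summable_pow_mul_geometric_of_norm_lt_one 2 hrn
    have h1 := summable_pow_mul_geometric_of_norm_lt_one 1 hrn
    have h0 := summable_pow_mul_geometric_of_norm_lt_one 0 hrn
    refine ((h2.add (h1.mul_left 3)).add (h0.mul_left 2)).congr fun n => ?_
    simp only [Nat.add_sub_cancel]
    push_cast
    ring
  have key := hasDerivAt_tsum_of_isPreconnected (𝕜 := ℂ) (g := fun n (w : ℂ) => a n * w ^ n)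
    (g' := fun n w => a n * ((n : ℂ) * w ^ (n - 1))) (t := Metric.ball 0 r) (y₀ := 0) (y := z)
    hS Metric.isOpen_ball (convex_ball (0 : ℂ) r).isPreconnected
    (fun n y _ => (hasDerivAt_pow n y).const_mul (a n))
    (fun n y hy => by
      have hy' : ‖y‖ ≤ r := by
        rw [Metric.mem_ball, dist_zero_right] at hy; exact hy.le
      rw [norm_mul, norm_mul, norm_pow, Complex.norm_natCast, mul_assoc]
      have := ha n
      gcongr)
    (Metric.mem_ball_self hr0)
    (summable_of_ne_finset_zero (s := {0}) (fun n hn => by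
      have : n ≠ 0 := by simpa using hn
      simp [this]))
    (by rw [Metric.mem_ball, dist_zero_right]; exact hr1)
  have hS' : Summable (fun n => a n * ((n : ℂ) * z ^ (n - 1))) := by
    refine Summable.of_norm_bounded hS (fun n => ?_)
    rw [norm_mul, norm_mul, norm_pow, Complex.norm_natCast, mul_assoc]
    have := ha n
    gcongr
  have e : ∑' n : ℕ, a n * ((n : ℂ) * z ^ (n - 1)) =
      ∑' n : ℕ, ((n : ℂ) + 1) * a (n + 1) * z ^ n := by
    rw [hS'.tsum_eq_zero_add]
    simp only [Nat.cast_zero, zero_mul, mul_zero, zero_add]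
    refine tsum_congr fun n => ?_
    simp only [Nat.add_sub_cancel]
    push_cast
    ring
  rw [← e]
  exact key

lemma hyp_series_summable (a : ℕ → ℂ) (ha : ∀ n, ‖a n‖ ≤ n + 1) {z : ℂ} (hz : ‖z‖ < 1) :
    Summable (fun n => a n * z ^ n) := by
  have hrn : ‖(‖z‖)‖ < 1 := by rwa [norm_norm]
  have h1 := summable_pow_mul_geometric_of_norm_lt_one 1 hrn
  have h0 := summable_pow_mul_geometric_of_norm_lt_one 0 hrn
  refine Summable.of_norm_bounded (h1.add h0) (fun n => ?_)
  rw [norm_mul, norm_pow]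
  have := ha n
  calc ‖a n‖ * ‖z‖ ^ n ≤ ((n : ℝ) + 1) * ‖z‖ ^ n := by gcongr
    _ = _ := by ring

/-- coefficient -/
noncomputable def hypC (n : ℕ) : ℂ := ((((2*n).factorial : ℂ)) / (4^n * (n.factorial : ℂ)^2))^2

lemma hypC_succ (n : ℕ) : ((n : ℂ) + 1) ^ 2 * hypC (n + 1) = ((n : ℂ) + 1 / 2) ^ 2 * hypC n := by
  unfold hypC
  have h1 : (2 * (n + 1)).factorial = (2 * n + 2) * ((2 * n + 1) * (2 * n).factorial) := by
    rw [show 2 * (n + 1) = 2 * n + 1 + 1 by ring, Nat.factorial_succ, Nat.factorial_succ]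
  have h0 : (n.factorial : ℂ) ≠ 0 := by exact_mod_cast n.factorial_ne_zero
  have h2 : (n : ℂ) + 1 ≠ 0 := by exact_mod_cast n.succ_ne_zero
  rw [h1, Nat.factorial_succ]
  push_cast
  field_simp
  ring

lemma hypC_norm (n : ℕ) : ‖hypC n‖ ≤ 1 := by
  induction n with
  | zero => simp [hypC]
  | succ n ih =>
    have h := congrArg norm (hypC_succ n)
    rw [norm_mul, norm_mul, norm_pow, norm_pow] at h
    have e1 : ‖(n : ℂ) + 1‖ = n + 1 := by
      rw [show (n : ℂ) + 1 = ((n + 1 : ℕ) : ℂ) by push_cast; ring, Complex.norm_natCast]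
      push_cast; ring
    have e2 : ‖(n : ℂ) + 1 / 2‖ = n + 1 / 2 := by
      rw [show (n : ℂ) + 1 / 2 = (((n : ℝ) + 1 / 2 : ℝ) : ℂ) by push_cast; ring, Complex.norm_real,
        Real.norm_of_nonneg (by positivity)]
    rw [e1, e2] at h
    have hn : (0 : ℝ) ≤ n := n.cast_nonneg
    have : ((n : ℝ) + 1) ^ 2 * ‖hypC (n + 1)‖ ≤ ((n : ℝ) + 1) ^ 2 * 1 := by
      rw [h]
      have := norm_nonneg (hypC n)
      gcongr
      linarith
    exact le_of_mul_le_mul_left this (by positivity)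

lemma hypF_eq (z : ℂ) : hypF z = ∑' n, hypC n * z ^ n := rfl

/-- derivative of hypF -/
noncomputable def hypD (z : ℂ) : ℂ := ∑' n : ℕ, ((n : ℂ) + 1) * hypC (n + 1) * z ^ n

lemma hypF_hasDerivAt {z : ℂ} (hz : ‖z‖ < 1) : HasDerivAt hypF (hypD z) z :=
  hyp_series_hasDerivAt hypC (fun n => (hypC_norm n).trans (by
    have : (0 : ℝ) ≤ n := n.cast_nonneg
    linarith)) hz

/-- coefficients of `z (1 - z) F'` -/
noncomputable def hypW : ℕ → ℂ
  | 0 => 0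
  | n + 1 => ((n : ℂ) + 1) * hypC (n + 1) - n * hypC n

lemma hyp_norm_succ (n : ℕ) : ‖((n : ℂ) + 1) * hypC (n + 1)‖ ≤ n + 1 := by
  rw [show (n : ℂ) + 1 = ((n + 1 : ℕ) : ℂ) by push_cast; ring, norm_mul, Complex.norm_natCast]
  have := hypC_norm (n + 1)
  push_cast
  have hn : (0 : ℝ) ≤ n := n.cast_nonneg
  nlinarith

lemma hyp_norm_mul (n : ℕ) : ‖(n : ℂ) * hypC n‖ ≤ n + 1 := by
  rw [norm_mul, Complex.norm_natCast]
  have := hypC_norm n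
  have hn : (0 : ℝ) ≤ n := n.cast_nonneg
  nlinarith

lemma hypC_real (n : ℕ) : ∃ c : ℝ, 0 ≤ c ∧ c ≤ 1 ∧ hypC n = c := by
  have h : hypC n = ((((((2*n).factorial : ℝ)) / (4^n * (n.factorial : ℝ)^2))^2 : ℝ) : ℂ) := by
    unfold hypC; push_cast; rfl
  refine ⟨_, by positivity, ?_, h⟩
  have := hypC_norm n
  rw [h, Complex.norm_real] at this
  exact (le_abs_self _).trans this

lemma hypW_norm (n : ℕ) : ‖hypW n‖ ≤ n + 1 := by
  cases n with
  | zero => simp [hypW]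
  | succ n =>
    obtain ⟨c, hc0, hc1, hc⟩ := hypC_real n
    obtain ⟨d, hd0, hd1, hd⟩ := hypC_real (n + 1)
    have : hypW (n + 1) = ((((n : ℝ) + 1) * d - n * c : ℝ) : ℂ) := by
      simp only [hypW, hc, hd]; push_cast; ring
    rw [this, Complex.norm_real, Real.norm_eq_abs, abs_le]
    have hn : (0 : ℝ) ≤ n := n.cast_nonneg
    push_cast
    constructor <;> nlinarith [mul_nonneg hn hc0, mul_nonneg hn hd0]

lemma hypW_sum {z : ℂ} (hz : ‖z‖ < 1) : ∑' n, hypW n * z ^ n = z * (1 - z) * hypD z := by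
  have s1 := hyp_series_summable (fun n => ((n : ℂ) + 1) * hypC (n + 1)) hyp_norm_succ hz
  have s2 := hyp_series_summable (fun n => (n : ℂ) * hypC n) hyp_norm_mul hz
  have s3 := hyp_series_summable hypW hypW_norm hz
  have e2 : ∑' n : ℕ, (n : ℂ) * hypC n * z ^ n = z * hypD z := by
    rw [s2.tsum_eq_zero_add, hypD, ← tsum_mul_left]
    simp only [Nat.cast_zero, zero_mul, zero_add]
    refine tsum_congr fun n => ?_
    push_cast; ring
  rw [s3.tsum_eq_zero_add]
  have : ∀ n : ℕ, hypW (n + 1) * z ^ (n + 1) =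
      z * (((n : ℂ) + 1) * hypC (n + 1) * z ^ n) - z * ((n : ℂ) * hypC n * z ^ n) := by
    intro n; simp only [hypW]; ring
  simp_rw [this]
  rw [(s1.mul_left z).tsum_sub (s2.mul_left z), tsum_mul_left, tsum_mul_left, e2]
  simp only [hypW, hypD]
  ring

/-- `z (1 - z) F'` as power series -/
noncomputable def hypQ (z : ℂ) : ℂ := ∑' n, hypW n * z ^ n

lemma hypQ_hasDerivAt {z : ℂ} (hz : ‖z‖ < 1) : HasDerivAt hypQ (hypF z / 4) z := by
  have := hyp_series_hasDerivAt hypW hypW_norm hz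
  have e : hypF z / 4 = ∑' n : ℕ, ((n : ℂ) + 1) * hypW (n + 1) * z ^ n := by
    rw [hypF_eq, ← tsum_div_const]
    refine tsum_congr fun n => ?_
    have h := hypC_succ n
    simp only [hypW]
    linear_combination (-z ^ n) * h
  rw [e]
  exact this


/-- `(1 + y²)^(1/4)` -/
noncomputable def hypR (y : ℝ) : ℝ := (1 + y ^ 2) ^ ((1:ℝ)/4)

/-- argument of `F` on the right-hand side -/
noncomputable def hypZ (ε y : ℝ) : ℝ := (1 + ε * (y / hypR y ^ 2)) / 2

/-- solution -/
noncomputable def hypV (ε y : ℝ) : ℂ := (hypR y : ℂ)⁻¹ * hypF (hypZ ε y)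

/-- quasi-derivative of the solution -/
noncomputable def hypP (ε y : ℝ) : ℂ :=
  -(y : ℂ) / 2 * ((hypR y : ℂ)⁻¹ * hypF (hypZ ε y)) + 2 * ε * hypR y * hypQ (hypZ ε y)

lemma hypR_four (y : ℝ) : hypR y ^ 4 = 1 + y ^ 2 := by
  have hpos : 0 < 1 + y ^ 2 := by positivity
  unfold hypR
  rw [← Real.rpow_natCast, ← Real.rpow_mul hpos.le]; norm_num

lemma hypR_pos (y : ℝ) : 0 < hypR y := Real.rpow_pos_of_pos (by positivity) _

lemma hypR_sqrt (y : ℝ) : Real.sqrt (1 + y ^ 2) = hypR y ^ 2 := by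
  have hpos : 0 < 1 + y ^ 2 := by positivity
  rw [Real.sqrt_eq_iff_mul_self_eq hpos.le (by positivity), ← hypR_four]; ring

lemma hypR_hasDerivAt (x : ℝ) : HasDerivAt hypR (x / (2 * hypR x ^ 3)) x := by
  have hpos : 0 < 1 + x ^ 2 := by positivity
  have h1 : HasDerivAt (fun y : ℝ => 1 + y ^ 2) (2 * x) x := by
    simpa using (hasDerivAt_pow 2 x).const_add 1
  have h2 := h1.rpow_const (p := (1:ℝ)/4) (Or.inl hpos.ne')
  have h3 : (1 + x ^ 2) ^ ((1:ℝ)/4 - 1) = hypR x / hypR x ^ 4 := by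
    rw [Real.rpow_sub_one hpos.ne', hypR_four, hypR]
  rw [h3] at h2
  have e : x / (2 * hypR x ^ 3) = 2 * x * (1 / 4) * (hypR x / hypR x ^ 4) := by
    have := (hypR_pos x).ne'
    field_simp
    norm_num
  rw [e]
  exact h2

lemma hypZ_hasDerivAt (ε x : ℝ) : HasDerivAt (hypZ ε) (ε / (2 * hypR x ^ 6)) x := by
  have hrx := (hypR_pos x).ne'
  have h := ((((hasDerivAt_id x).div ((hypR_hasDerivAt x).pow 2)
    (pow_ne_zero 2 hrx)).const_mul ε).const_add 1).div_const 2
  have e := hypR_four x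
  refine HasDerivAt.congr_deriv h ?_
  simp only [id, Pi.pow_apply]
  field_simp
  simp only [Nat.cast_ofNat, Nat.add_one_sub_one, pow_one]
  field_simp
  linear_combination ε * e

lemma hypZ_mul (ε : ℝ) (hε : ε ^ 2 = 1) (x : ℝ) :
    hypZ ε x * (1 - hypZ ε x) * (4 * hypR x ^ 4) = 1 := by
  have hrx := (hypR_pos x).ne'
  unfold hypZ
  field_simp
  ring_nf
  linear_combination 4 * hypR_four x - 4 * x ^ 2 * hε

lemma hypZ_norm (ε : ℝ) (hε : ε ^ 2 = 1) (x : ℝ) : ‖((hypZ ε x : ℝ) : ℂ)‖ < 1 := by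
  rw [Complex.norm_real, Real.norm_eq_abs, abs_lt]
  have h := hypZ_mul ε hε x
  have hr := hypR_pos x
  have : 0 < hypZ ε x * (1 - hypZ ε x) := by
    by_contra hcon
    have : 0 < 4 * hypR x ^ 4 := by positivity
    nlinarith
  constructor <;> nlinarith

lemma hypV_hasDerivAt (ε : ℝ) (hε : ε ^ 2 = 1) (x : ℝ) :
    HasDerivAt (hypV ε) (hypP ε x / (1 + (x : ℂ) ^ 2)) x := by
  have hz := hypZ_norm ε hε x
  have hF := (hypF_hasDerivAt hz).comp x (hypZ_hasDerivAt ε x).ofReal_comp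
  have hrC : (hypR x : ℂ) ≠ 0 := by exact_mod_cast (hypR_pos x).ne'
  have hR := (hypR_hasDerivAt x).ofReal_comp.inv hrC
  refine HasDerivAt.congr_deriv (hR.mul hF) ?_
  have h4 : (1 + (x : ℂ) ^ 2) = (hypR x : ℂ) ^ 4 := by exact_mod_cast (hypR_four x).symm
  have hm : (hypZ ε x : ℂ) * (1 - hypZ ε x) * (4 * (hypR x : ℂ) ^ 4) = 1 := by
    exact_mod_cast hypZ_mul ε hε x
  have hQ : hypQ (hypZ ε x) = hypZ ε x * (1 - hypZ ε x) * hypD (hypZ ε x) := hypW_sum hz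
  have hQ' : hypD (hypZ ε x) = 4 * (hypR x : ℂ) ^ 4 * hypQ (hypZ ε x) := by
    rw [hQ]; linear_combination (-hypD (hypZ ε x)) * hm
  simp only [Function.comp, Pi.inv_apply, hypP, h4, hQ']
  push_cast
  field_simp
  ring

lemma hypP_hasDerivAt (ε : ℝ) (hε : ε ^ 2 = 1) (x : ℝ) :
    HasDerivAt (hypP ε) (-hypV ε x / 4) x := by
  have hz := hypZ_norm ε hε x
  have hV := hypV_hasDerivAt ε hε x
  have hQ := (hypQ_hasDerivAt hz).comp x (hypZ_hasDerivAt ε x).ofReal_comp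
  have hrC : (hypR x : ℂ) ≠ 0 := by exact_mod_cast (hypR_pos x).ne'
  have hR := ((hypR_hasDerivAt x).ofReal_comp.const_mul (2 * (ε : ℂ)))
  have hx := ((hasDerivAt_id x).ofReal_comp.neg.div_const 2)
  refine HasDerivAt.congr_deriv ((hx.mul hV).add (hR.mul hQ)) ?_
  have h4 : (1 + (x : ℂ) ^ 2) = (hypR x : ℂ) ^ 4 := by exact_mod_cast (hypR_four x).symm
  have hε' : (ε : ℂ) ^ 2 = 1 := by exact_mod_cast hε
  have hx2 : (x : ℂ) ^ 2 = (hypR x : ℂ) ^ 4 - 1 := by rw [← h4]; ring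
  simp only [Function.comp, Pi.neg_apply, id, hypP, hypV, h4]
  push_cast
  field_simp
  ring_nf
  simp only [hε', hx2]
  ring

lemma hypU_norm {x : ℝ} (hx : x ∈ Set.Ioo (-1 : ℝ) 1) : ‖(1 + Complex.I * x) / 2‖ < 1 := by
  have h : ‖1 + Complex.I * (x : ℂ)‖ ≤ 1 + |x| := by
    refine (norm_add_le _ _).trans ?_
    simp
  have : |x| < 1 := abs_lt.mpr hx
  rw [norm_div]
  simp only [Complex.norm_ofNat]
  linarith

lemma hypU_hasDerivAt {x : ℝ} (hx : x ∈ Set.Ioo (-1 : ℝ) 1) :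
    HasDerivAt (fun y : ℝ => hypF ((1 + Complex.I * y) / 2))
      (2 * Complex.I * hypQ ((1 + Complex.I * x) / 2) / (1 + (x : ℂ) ^ 2)) x ∧
    HasDerivAt (fun y : ℝ => 2 * Complex.I * hypQ ((1 + Complex.I * y) / 2))
      (-hypF ((1 + Complex.I * x) / 2) / 4) x := by
  have hz := hypU_norm hx
  have hl : HasDerivAt (fun y : ℝ => (1 + Complex.I * (y : ℂ)) / 2) (Complex.I / 2) x := by
    have := (((hasDerivAt_id x).ofReal_comp.const_mul Complex.I).const_add 1).div_const 2
    simpa using this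
  have h4 : (1 + (x : ℂ) ^ 2) ≠ 0 := by
    have : (1 + x ^ 2) ≠ 0 := by positivity
    exact_mod_cast this
  have hI := Complex.I_sq
  constructor
  · have hc := (hypF_hasDerivAt hz).comp (h := fun y : ℝ => (1 + Complex.I * (y : ℂ)) / 2) x hl
    refine HasDerivAt.congr_deriv hc ?_
    have hQ : hypQ _ = _ := hypW_sum hz
    rw [hQ, eq_div_iff h4]
    linear_combination (hypD ((1 + Complex.I * x) / 2)) * Complex.I * x ^ 2 / 2 * hI
  · have hc := (hypQ_hasDerivAt hz).comp (h := fun y : ℝ => (1 + Complex.I * (y : ℂ)) / 2) x hl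
    refine HasDerivAt.congr_deriv (hc.const_mul (2 * Complex.I)) ?_
    linear_combination (hypF ((1 + Complex.I * x) / 2)) / 4 * hI

lemma hyp_field_lipschitz (t : ℝ) :
    LipschitzWith 1 (fun Y : ℂ × ℂ => (Y.2 / (1 + (t : ℂ) ^ 2), -Y.1 / 4)) := by
  refine LipschitzWith.of_dist_le_mul fun Y Z => ?_
  simp only [NNReal.coe_one, one_mul]
  rw [Prod.dist_eq, Prod.dist_eq]
  have h1 : ‖1 + (t : ℂ) ^ 2‖ = 1 + t ^ 2 := by
    rw [show 1 + (t : ℂ) ^ 2 = ((1 + t ^ 2 : ℝ) : ℂ) by push_cast; ring, Complex.norm_real,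
      Real.norm_of_nonneg (by positivity)]
  refine max_le ?_ ?_
  · refine le_trans ?_ (le_max_right _ _)
    simp only [dist_eq_norm]
    rw [← sub_div, norm_div, h1]
    exact div_le_self (norm_nonneg _) (by nlinarith [sq_nonneg t])
  · refine le_trans ?_ (le_max_left _ _)
    simp only [dist_eq_norm]
    rw [← sub_div, norm_div, ← neg_sub', norm_neg]
    exact div_le_self (norm_nonneg _) (by simp)

lemma hyp_main {x : ℝ} (hx : x ∈ Set.Ioo (-1 : ℝ) 1) :
    hypF ((1 + Complex.I * x) / 2) =
      ((1 + Complex.I) / 2) * hypV 1 x + ((1 - Complex.I) / 2) * hypV (-1) x := by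
  have key := ODE_solution_unique_of_mem_Ioo (a := -1) (b := 1) (t₀ := 0) (K := 1)
    (v := fun (t : ℝ) (Y : ℂ × ℂ) => (Y.2 / (1 + (t : ℂ) ^ 2), -Y.1 / 4))
    (s := fun _ => Set.univ)
    (f := fun y : ℝ => (hypF ((1 + Complex.I * y) / 2),
      2 * Complex.I * hypQ ((1 + Complex.I * y) / 2)))
    (g := fun y : ℝ => (((1 + Complex.I) / 2) * hypV 1 y + ((1 - Complex.I) / 2) * hypV (-1) y,
      ((1 + Complex.I) / 2) * hypP 1 y + ((1 - Complex.I) / 2) * hypP (-1) y))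
    (fun t _ => (hyp_field_lipschitz t).lipschitzOnWith)
    (by norm_num)
    (fun t ht => ⟨(hypU_hasDerivAt ht).1.prodMk (hypU_hasDerivAt ht).2, Set.mem_univ _⟩)
    (fun t _ => ⟨by
      have a1 := hypV_hasDerivAt 1 (by norm_num) t
      have a2 := hypV_hasDerivAt (-1) (by norm_num) t
      have b1 := hypP_hasDerivAt 1 (by norm_num) t
      have b2 := hypP_hasDerivAt (-1) (by norm_num) t
      refine HasDerivAt.congr_deriv
        (((a1.const_mul ((1 + Complex.I) / 2)).add (a2.const_mul ((1 - Complex.I) / 2))).prodMk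
        ((b1.const_mul ((1 + Complex.I) / 2)).add (b2.const_mul ((1 - Complex.I) / 2)))) ?_
      ext1
      · simp only; ring
      · simp only; ring, Set.mem_univ _⟩)
    (by
      have hr : hypR 0 = 1 := by simp [hypR]
      simp only [hypV, hypP, hypZ, hr]
      ext1
      · simp; ring
      · simp; ring)
  exact congrArg Prod.fst (key hx)

/-- Ramanujan's quadratic transformation: for real `x` with `|x|` small enough,
`(1+x²)^(1/4)·F((1+ix)/2) = ((1+i)/2)·F((1 + x/√(1+x²))/2) + ((1-i)/2)·F((1 - x/√(1+x²))/2)`,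
where `F(z) = ₂F₁(1/2,1/2;1;z)`. -/
theorem ramanujan_quadratic_transformation :
    ∃ δ > (0:ℝ), ∀ x : ℝ, |x| < δ →
      (((1 + x^2) ^ ((1:ℝ)/4) : ℝ) : ℂ) * hypF ((1 + Complex.I * x) / 2) =
        ((1 + Complex.I) / 2) * hypF ((((1 + x / Real.sqrt (1 + x^2)) / 2 : ℝ)) : ℂ) +
        ((1 - Complex.I) / 2) * hypF ((((1 - x / Real.sqrt (1 + x^2)) / 2 : ℝ)) : ℂ) := by
  refine ⟨1, one_pos, fun x hx => ?_⟩
  have h := hyp_main (abs_lt.mp hx)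
  have hr : (hypR x : ℂ) ≠ 0 := by exact_mod_cast (hypR_pos x).ne'
  have e : (((1 + x^2) ^ ((1:ℝ)/4) : ℝ) : ℂ) = (hypR x : ℂ) := rfl
  have z1 : (1 + x / Real.sqrt (1 + x^2)) / 2 = hypZ 1 x := by
    rw [hypR_sqrt, hypZ]; ring
  have z2 : (1 - x / Real.sqrt (1 + x^2)) / 2 = hypZ (-1) x := by
    rw [hypR_sqrt, hypZ]; ring
  rw [e, z1, z2, h, hypV, hypV]
  field_simp
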